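/- Under Assumption (A): for any h ∈ B_V, each t ∈ {1,…,T} and each u ∈ U, the function x ↦ Λ_t(x,u;h) belongs to B_V. -/

import Mathlib

open Filter Topology

/-- The setup for a countable-stated (here `ℤ`-stated) risk-sensitive MDP with horizon `T`,
transition kernels `q ε t · x u` (for `0 < ε ≤ eps0`), rate functions `I`, running costs
`f τ t x u` and terminal costs `g τ x`.  The Lyapunov function `V` is positive and inf-finite. -/
structure RSSetup (U : Type*) [MetricSpace U] where
  T : ℕ
  eps0 : ℝ
  eps0_pos : 0 < eps0
  V : ℤ → ℝ
  V_pos : ∀ x, 0 < V x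
  V_infFinite : ∀ K : ℝ, {x : ℤ | V x ≤ K}.Finite
  q : ℝ → ℕ → ℤ → U → ℤ → ℝ
  q_nonneg : ∀ ε ∈ Set.Ioc (0 : ℝ) eps0, ∀ t ∈ Finset.Icc 1 T, ∀ (x : ℤ) (u : U) (z : ℤ),
    0 ≤ q ε t x u z
  q_pmf : ∀ ε ∈ Set.Ioc (0 : ℝ) eps0, ∀ t ∈ Finset.Icc 1 T, ∀ (x : ℤ) (u : U),
    HasSum (q ε t x u) 1
  I : ℕ → ℤ → U → ℤ → ENNReal
  I_subfin : ∀ (t : ℕ) (x : ℤ) (u : U) (K : ENNReal), K ≠ ⊤ → {z : ℤ | I t x u z ≤ K}.Finite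
  f : ℕ → ℕ → ℤ → U → ℝ
  g : ℕ → ℤ → ℝ

namespace RSSetup

variable {U : Type*} [MetricSpace U]

/-- `Λ^ε_t(x,u;h) = ε log ∑_z exp(h(z)/ε) q^ε_t(z;x,u)`. -/
noncomputable def lamE (S : RSSetup U) (ε : ℝ) (t : ℕ) (x : ℤ) (u : U) (h : ℤ → ℝ) : ℝ :=
  ε * Real.log (∑' z : ℤ, Real.exp (h z / ε) * S.q ε t x u z)

/-- `Λ_t(x,u;h) = sup_z [h(z) - I_t(z;x,u)]` (the supremum being over the points where the
rate function is finite). -/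
noncomputable def lam (S : RSSetup U) (t : ℕ) (x : ℤ) (u : U) (h : ℤ → ℝ) : ℝ :=
  sSup ((fun z => h z - (S.I t x u z).toReal) '' {z : ℤ | S.I t x u z ≠ ⊤})

/-- Membership in `B_V`: bounded below and `|h(x)|/V(x) → 0` as `|x| → ∞`. -/
def memBV (S : RSSetup U) (h : ℤ → ℝ) : Prop :=
  BddBelow (Set.range h) ∧
    Tendsto (fun x : ℤ => |h x| / S.V x) Filter.cofinite (nhds 0)

/-- The pointwise supremum `x ↦ sup_{0<ε≤ε₀} h^ε(x)` of a family. -/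
noncomputable def supFam (S : RSSetup U) (h : ℝ → ℤ → ℝ) : ℤ → ℝ :=
  fun x => sSup ((fun ε => h ε x) '' Set.Ioc (0 : ℝ) S.eps0)

/-- Membership of a family `{h^ε}_{0<ε≤ε₀}` in `𝓑_V`: each member is in `B_V`, the family is
uniformly bounded below, and the pointwise supremum `sup_ε h^ε` belongs to `B_V`. -/
def memFam (S : RSSetup U) (h : ℝ → ℤ → ℝ) : Prop :=
  (∀ ε ∈ Set.Ioc (0 : ℝ) S.eps0, S.memBV (h ε)) ∧
  (∃ c : ℝ, ∀ ε ∈ Set.Ioc (0 : ℝ) S.eps0, ∀ x, c ≤ h ε x) ∧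
  (∀ x, BddAbove ((fun ε => h ε x) '' Set.Ioc (0 : ℝ) S.eps0)) ∧
  S.memBV (S.supFam h)

/-- Assumption (A) with parameter `λ₀`. -/
def AssumptionA (S : RSSetup U) (lam0 : ℝ) : Prop :=
  0 < lam0 ∧
  -- (A1): `sup_{0<ε≤ε₀} Λ^ε_t(x,u;λ₀ V) < ∞` (in particular the defining sums converge)
  (∀ t ∈ Finset.Icc 1 S.T, ∀ (x : ℤ) (u : U),
    (∀ ε ∈ Set.Ioc (0 : ℝ) S.eps0,
      Summable fun z : ℤ => Real.exp (lam0 * S.V z / ε) * S.q ε t x u z) ∧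
    ∃ C : ℝ, ∀ ε ∈ Set.Ioc (0 : ℝ) S.eps0, S.lamE ε t x u (fun z => lam0 * S.V z) ≤ C) ∧
  -- (A2): continuity in `u`, and `Λ^ε_t(x,u^ε;h) → Λ_t(x,u;h)` whenever `u^ε → u`
  (∀ t ∈ Finset.Icc 1 S.T, ∀ x : ℤ, ∀ h : ℤ → ℝ, S.memBV h →
    (∀ ε ∈ Set.Ioc (0 : ℝ) S.eps0, Continuous fun u : U => S.lamE ε t x u h) ∧
    (∀ (u : U) (uu : ℝ → U), Tendsto uu (nhdsWithin 0 (Set.Ioi 0)) (nhds u) →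
      Tendsto (fun ε => S.lamE ε t x (uu ε) h) (nhdsWithin 0 (Set.Ioi 0))
        (nhds (S.lam t x u h)))) ∧
  -- (A3): `limsup_{|x|→∞} sup_{0<ε≤ε₀} Λ^ε_t(x,u;λV)/(λV(x)) < K_u` for `λ ∈ (0,λ₀)`
  (∀ t ∈ Finset.Icc 1 S.T, ∀ u : U, ∃ Ku : ℝ, ∀ lam' ∈ Set.Ioo (0 : ℝ) lam0,
    ∃ c < Ku, ∀ᶠ x in (Filter.cofinite : Filter ℤ), ∀ ε ∈ Set.Ioc (0 : ℝ) S.eps0,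
      S.lamE ε t x u (fun z => lam' * S.V z) ≤ c * (lam' * S.V x))

/-- Assumption (B). -/
def AssumptionB (S : RSSetup U) : Prop :=
  (∀ τ ∈ Finset.Icc 1 S.T, ∀ t ∈ Finset.Icc 1 S.T, ∀ u : U,
    S.memBV fun x => S.f τ t x u) ∧
  (∀ τ ∈ Finset.Icc 1 S.T, S.memBV (S.g τ)) ∧
  (∀ t ∈ Finset.Icc 1 S.T, ∀ x : ℤ, Continuous fun u : U => S.f t t x u) ∧
  (∀ t ∈ Finset.Icc 1 S.T, ∀ x : ℤ, ∀ K : ℝ, IsCompact {u : U | S.f t t x u ≤ K})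

/-- Assumption (C) with parameter `λ₀`: growth conditions over the sublevel sets
`B_{t,λ}(x) = {u : f_{t,t}(x,u) ≤ λ V(x)}`. -/
def AssumptionC (S : RSSetup U) (lam0 : ℝ) : Prop :=
  0 < lam0 ∧ ∃ K1 : ℝ,
    ∀ lam' ∈ Set.Ioo (0 : ℝ) lam0, ∀ τ ∈ Finset.Icc 1 S.T, ∀ t ∈ Finset.Icc 1 S.T,
      (∀ c > K1, ∀ᶠ x in (Filter.cofinite : Filter ℤ), ∀ u : U,
        S.f t t x u ≤ lam' * S.V x → S.f τ t x u ≤ c * (lam' * S.V x)) ∧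
      (∀ c > K1, ∀ᶠ x in (Filter.cofinite : Filter ℤ), ∀ ε ∈ Set.Ioo (0 : ℝ) S.eps0, ∀ u : U,
        S.f t t x u ≤ lam' * S.V x →
          S.lamE ε t x u (fun z => lam' * S.V z) ≤ c * (lam' * S.V x))

/-- The cost `J^ε_{τ,t}(x;π)` of a Markov policy `π`, defined backward from
`J^ε_{τ,T+1} = g_τ`. -/
noncomputable def Jeps (S : RSSetup U) (ε : ℝ) (π : ℕ → ℤ → U) (τ t : ℕ) : ℤ → ℝ :=
  if h : S.T + 1 ≤ t then S.g τ
  else fun x => S.f τ t x (π t x) + S.lamE ε t x (π t x) (S.Jeps ε π τ (t + 1))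
termination_by S.T + 1 - t
decreasing_by omega

/-- The limit cost `J_{τ,t}(x;π)` of a Markov policy `π`, defined backward from
`J_{τ,T+1} = g_τ`. -/
noncomputable def Jlim (S : RSSetup U) (π : ℕ → ℤ → U) (τ t : ℕ) : ℤ → ℝ :=
  if h : S.T + 1 ≤ t then S.g τ
  else fun x => S.f τ t x (π t x) + S.lam t x (π t x) (S.Jlim π τ (t + 1))
termination_by S.T + 1 - t
decreasing_by omega

/-- `(η, Θ)` solves the `ε`-recursion system. -/
def SolvesEpsSystem (S : RSSetup U) (ε : ℝ) (η : ℕ → ℤ → U) (Θ : ℕ → ℕ → ℤ → ℝ) : Prop :=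
  (∀ τ ∈ Finset.Icc 1 S.T, Θ τ (S.T + 1) = S.g τ) ∧
  (∀ t ∈ Finset.Icc 1 S.T, ∀ (x : ℤ) (u : U),
    S.f t t x (η t x) + S.lamE ε t x (η t x) (Θ t (t + 1)) ≤
      S.f t t x u + S.lamE ε t x u (Θ t (t + 1))) ∧
  (∀ τ ∈ Finset.Icc 1 S.T, ∀ t ∈ Finset.Icc 1 S.T, ∀ x : ℤ,
    Θ τ t x = S.f τ t x (η t x) + S.lamE ε t x (η t x) (Θ τ (t + 1)))

/-- `(η, Θ)` solves the limit recursion system. -/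
def SolvesLimSystem (S : RSSetup U) (η : ℕ → ℤ → U) (Θ : ℕ → ℕ → ℤ → ℝ) : Prop :=
  (∀ τ ∈ Finset.Icc 1 S.T, Θ τ (S.T + 1) = S.g τ) ∧
  (∀ t ∈ Finset.Icc 1 S.T, ∀ (x : ℤ) (u : U),
    S.f t t x (η t x) + S.lam t x (η t x) (Θ t (t + 1)) ≤
      S.f t t x u + S.lam t x u (Θ t (t + 1))) ∧
  (∀ τ ∈ Finset.Icc 1 S.T, ∀ t ∈ Finset.Icc 1 S.T, ∀ x : ℤ,
    Θ τ t x = S.f τ t x (η t x) + S.lam t x (η t x) (Θ τ (t + 1)))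

/-- `π` is a time-inconsistent `ε`-risk-sensitive equilibrium. -/
def IsEpsEquilibrium (S : RSSetup U) (ε : ℝ) (π : ℕ → ℤ → U) : Prop :=
  ∀ t ∈ Finset.Icc 1 S.T, ∀ (x : ℤ) (u : U),
    S.Jeps ε π t t x ≤ S.f t t x u + S.lamE ε t x u (S.Jeps ε π t (t + 1))

/-- `π` is a time-inconsistent risk-sensitive equilibrium for the limit cost. -/
def IsLimEquilibrium (S : RSSetup U) (π : ℕ → ℤ → U) : Prop :=
  ∀ t ∈ Finset.Icc 1 S.T, ∀ (x : ℤ) (u : U),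
    S.Jlim π t t x ≤ S.f t t x u + S.lam t x u (S.Jlim π t (t + 1))

end RSSetup

/-!
Since `h` is bounded below and `h = o(V)`, for every `l > 0` there is a `C` with `m ≤ h ≤ C + l V`.
The functionals `Λ^ε` are monotone and commute with adding constants, so these bounds pass to
`m ≤ Λ^ε(x; h) ≤ C + Λ^ε(x; l V)`, and the growth condition turns the right-hand side into
`C + K l V(x)` with `K` independent of `l`. Letting `ε → 0` and choosing `l` with `K l` small gives
the claim, because `V → ∞` absorbs the constants.
-/

open Asymptotics

/-- The entropic risk measure `ε log ∑_z exp (h z / ε) p z` of `h` at risk parameter `ε`, for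
weights `p`. The sum takes the junk value `0` when it diverges. -/
noncomputable def entropicRisk {α : Type*} (ε : ℝ) (p h : α → ℝ) : ℝ :=
  ε * Real.log (∑' z, Real.exp (h z / ε) * p z)

/-- The class `B_V` on an arbitrary state space: functions that are bounded below and `o(V)` off
finite sets. -/
def MemBV {α : Type*} (V h : α → ℝ) : Prop :=
  BddBelow (Set.range h) ∧ h =o[cofinite] V

section EntropicRisk

variable {α : Type*} {ε c : ℝ} {p h k : α → ℝ}

lemma exp_const_add_div_mul (z : α) :
    Real.exp ((c + h z) / ε) * p z = Real.exp (c / ε) * (Real.exp (h z / ε) * p z) := by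
  rw [add_div, Real.exp_add, mul_assoc]

lemma exp_div_mul_le_of_le (hε : 0 ≤ ε) (hp : ∀ z, 0 ≤ p z) (hhk : ∀ z, h z ≤ k z) (z : α) :
    Real.exp (h z / ε) * p z ≤ Real.exp (k z / ε) * p z := by
  have := hp z
  have := hhk z
  gcongr

lemma summable_exp_div_mul_of_le (hε : 0 ≤ ε) (hp : ∀ z, 0 ≤ p z) (hhk : ∀ z, h z ≤ k z)
    (hk : Summable fun z => Real.exp (k z / ε) * p z) :
    Summable fun z => Real.exp (h z / ε) * p z :=
  hk.of_nonneg_of_le (fun z => mul_nonneg (Real.exp_pos _).le (hp z))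
    (exp_div_mul_le_of_le hε hp hhk)

lemma summable_exp_const_add_div_mul (hh : Summable fun z => Real.exp (h z / ε) * p z) :
    Summable fun z => Real.exp ((c + h z) / ε) * p z := by
  simpa only [exp_const_add_div_mul] using hh.mul_left (Real.exp (c / ε))

lemma tsum_exp_div_mul_pos (hp : ∀ z, 0 ≤ p z) (hp0 : p ≠ 0)
    (hh : Summable fun z => Real.exp (h z / ε) * p z) :
    0 < ∑' z, Real.exp (h z / ε) * p z := by
  obtain ⟨z, hz⟩ := Function.ne_iff.1 hp0
  exact hh.tsum_pos (fun y => mul_nonneg (Real.exp_pos _).le (hp y)) z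
    (mul_pos (Real.exp_pos _) ((hp z).lt_of_ne' hz))

lemma entropicRisk_const (hε : ε ≠ 0) (hp1 : HasSum p 1) : entropicRisk ε p (fun _ => c) = c := by
  rw [entropicRisk, tsum_mul_left, hp1.tsum_eq, mul_one, Real.log_exp, mul_div_cancel₀ c hε]

lemma entropicRisk_const_add (hε : ε ≠ 0) (hp : ∀ z, 0 ≤ p z) (hp0 : p ≠ 0)
    (hh : Summable fun z => Real.exp (h z / ε) * p z) :
    entropicRisk ε p (fun z => c + h z) = c + entropicRisk ε p h := by
  simp only [entropicRisk, exp_const_add_div_mul, tsum_mul_left]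
  rw [Real.log_mul (Real.exp_pos _).ne' (tsum_exp_div_mul_pos hp hp0 hh).ne', Real.log_exp,
    mul_add, mul_div_cancel₀ c hε]

lemma entropicRisk_mono (hε : 0 ≤ ε) (hp : ∀ z, 0 ≤ p z) (hp0 : p ≠ 0)
    (hk : Summable fun z => Real.exp (k z / ε) * p z) (hhk : ∀ z, h z ≤ k z) :
    entropicRisk ε p h ≤ entropicRisk ε p k := by
  have hh := summable_exp_div_mul_of_le hε hp hhk hk
  have hsum_le := hh.tsum_le_tsum (exp_div_mul_le_of_le hε hp hhk) hk
  exact mul_le_mul_of_nonneg_left (Real.log_le_log (tsum_exp_div_mul_pos hp hp0 hh) hsum_le) hε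

lemma entropicRisk_mem_Icc (hε : 0 < ε) (hp : ∀ z, 0 ≤ p z) (hp1 : HasSum p 1) {m : ℝ}
    (hk : Summable fun z => Real.exp (k z / ε) * p z) (hm : ∀ z, m ≤ h z)
    (hhk : ∀ z, h z ≤ c + k z) :
    entropicRisk ε p h ∈ Set.Icc m (c + entropicRisk ε p k) := by
  have hp0 : p ≠ 0 := by
    rintro rfl
    exact zero_ne_one (hasSum_zero.unique hp1)
  have hck := summable_exp_const_add_div_mul (c := c) hk
  constructor
  · calc m = entropicRisk ε p (fun _ => m) := (entropicRisk_const hε.ne' hp1).symm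
      _ ≤ entropicRisk ε p h :=
        entropicRisk_mono hε.le hp hp0 (summable_exp_div_mul_of_le hε.le hp hhk hck) hm
  · calc entropicRisk ε p h ≤ entropicRisk ε p (fun z => c + k z) :=
        entropicRisk_mono hε.le hp hp0 hck hhk
      _ = c + entropicRisk ε p k := entropicRisk_const_add hε.ne' hp hp0 hk

end EntropicRisk

section LittleO

variable {α : Type*} {V h φ : α → ℝ}

lemma exists_forall_le_const_add_mul_of_isLittleO (hV : ∀ᶠ x in cofinite, 0 ≤ V x)
    (hh : h =o[cofinite] V) {δ : ℝ} (hδ : 0 < δ) : ∃ C, ∀ x, h x ≤ C + δ * V x := by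
  have hdiff : ∀ᶠ x in cofinite, h x - δ * V x ≤ 0 := by
    filter_upwards [hV, hh.bound hδ] with x hVx hx
    rw [Real.norm_of_nonneg hVx] at hx
    exact sub_nonpos.2 ((Real.le_norm_self _).trans hx)
  obtain ⟨C, hC⟩ := (isBoundedUnder_of_eventually_le hdiff).bddAbove_range_of_cofinite
  exact ⟨C, fun x => sub_le_iff_le_add.1 (hC ⟨x, rfl⟩)⟩

lemma isLittleO_of_forall_eventually_le_const_add_mul {l : Filter α} {m : ℝ}
    (hV : Tendsto V l atTop) (hm : ∀ x, m ≤ φ x)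
    (hφ : ∀ δ > 0, ∃ C, ∀ᶠ x in l, φ x ≤ C + δ * V x) : φ =o[l] V := by
  refine isLittleO_iff.2 fun δ hδ => ?_
  obtain ⟨C, hC⟩ := hφ (δ / 2) (half_pos hδ)
  have hδV : Tendsto (fun x => δ / 2 * V x) l atTop := hV.const_mul_atTop (half_pos hδ)
  filter_upwards [hC, hδV.eventually_ge_atTop C, hδV.eventually_ge_atTop |m|]
    with x hx hCx hmx
  have hlow : -|m| ≤ φ x := (neg_abs_le m).trans (hm x)
  have := abs_nonneg m
  calc ‖φ x‖ ≤ δ * V x := abs_le.2 ⟨by linarith, by linarith⟩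
    _ ≤ δ * ‖V x‖ := mul_le_mul_of_nonneg_left (Real.le_norm_self _) hδ.le

lemma exists_mem_Ioo_mul_le {b δ : ℝ} (hb : 0 < b) (hδ : 0 < δ) (K : ℝ) :
    ∃ l ∈ Set.Ioo 0 b, K * l ≤ δ := by
  have hlim : Tendsto (fun l => K * l) (𝓝[>] 0) (𝓝 0) := by
    simpa using ((continuous_const_mul K).tendsto 0).mono_left nhdsWithin_le_nhds
  have hIoo : ∀ᶠ l in 𝓝[>] (0 : ℝ), l ∈ Set.Ioo 0 b := Ioo_mem_nhdsGT hb
  exact (hIoo.and (hlim.eventually_le_const hδ)).exists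

end LittleO

theorem statement4_general {α : Type*} {V : α → ℝ} (hV0 : ∀ x, 0 ≤ V x)
    (hV : Tendsto V cofinite atTop) {ε₀ lam0 : ℝ} (hε₀ : 0 < ε₀) (hlam0 : 0 < lam0)
    {q : ℝ → α → α → ℝ} (hq : ∀ ε ∈ Set.Ioc 0 ε₀, ∀ x z, 0 ≤ q ε x z)
    (hq1 : ∀ ε ∈ Set.Ioc 0 ε₀, ∀ x, HasSum (q ε x) 1)
    (hsum : ∀ ε ∈ Set.Ioc 0 ε₀, ∀ x, Summable fun z => Real.exp (lam0 * V z / ε) * q ε x z)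
    (hgrowth : ∃ K, ∀ l ∈ Set.Ioo 0 lam0, ∀ᶠ x in cofinite, ∀ ε ∈ Set.Ioc 0 ε₀,
      entropicRisk ε (q ε x) (fun z => l * V z) ≤ K * (l * V x))
    {h φ : α → ℝ} (hh : MemBV V h)
    (hφ : ∀ x, Tendsto (fun ε => entropicRisk ε (q ε x) h) (𝓝[>] 0) (𝓝 (φ x))) :
    MemBV V φ := by
  obtain ⟨⟨m, hm⟩, hhV⟩ := hh
  obtain ⟨K, hK⟩ := hgrowth
  have hsmall : ∀ᶠ ε in 𝓝[>] (0 : ℝ), ε ∈ Set.Ioc 0 ε₀ := Ioc_mem_nhdsGT hε₀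
  have bounds : ∀ l ∈ Set.Ioc 0 lam0, ∃ C, ∀ x, ∀ ε ∈ Set.Ioc 0 ε₀,
      entropicRisk ε (q ε x) h ∈
        Set.Icc m (C + entropicRisk ε (q ε x) (fun z => l * V z)) := by
    intro l hl
    obtain ⟨C, hC⟩ :=
      exists_forall_le_const_add_mul_of_isLittleO (.of_forall hV0) hhV hl.1
    refine ⟨C, fun x ε hε => entropicRisk_mem_Icc hε.1 (hq ε hε x) (hq1 ε hε x) ?_
      (fun z => hm ⟨z, rfl⟩) hC⟩
    exact summable_exp_div_mul_of_le hε.1.le (hq ε hε x)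
      (fun z => mul_le_mul_of_nonneg_right hl.2 (hV0 z)) (hsum ε hε x)
  have hmφ : ∀ x, m ≤ φ x := by
    obtain ⟨C, hC⟩ := bounds lam0 ⟨hlam0, le_rfl⟩
    exact fun x => ge_of_tendsto (hφ x) (hsmall.mono fun ε hε => (hC x ε hε).1)
  refine ⟨⟨m, Set.forall_mem_range.2 hmφ⟩,
    isLittleO_of_forall_eventually_le_const_add_mul hV hmφ fun δ hδ => ?_⟩
  obtain ⟨l, hl, hKl⟩ := exists_mem_Ioo_mul_le hlam0 hδ K
  obtain ⟨C, hC⟩ := bounds l ⟨hl.1, hl.2.le⟩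
  refine ⟨C, (hK l hl).mono fun x hx => le_of_tendsto (hφ x) (hsmall.mono fun ε hε => ?_)⟩
  calc entropicRisk ε (q ε x) h
      ≤ C + entropicRisk ε (q ε x) (fun z => l * V z) := (hC x ε hε).2
    _ ≤ C + K * (l * V x) := by gcongr; exact hx ε hε
    _ = C + K * l * V x := by rw [mul_assoc]
    _ ≤ C + δ * V x := by gcongr; exact hV0 x

namespace RSSetup

variable {U : Type*} [MetricSpace U] (S : RSSetup U)

lemma tendsto_V_cofinite_atTop : Tendsto S.V cofinite atTop :=
  tendsto_atTop.2 fun K => by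
    filter_upwards [(S.V_infFinite K).compl_mem_cofinite] with x hx
    exact le_of_not_ge hx

lemma memBV_iff {h : ℤ → ℝ} : S.memBV h ↔ MemBV S.V h :=
  and_congr_right' <| by
    rw [← isLittleO_abs_left, isLittleO_iff_tendsto fun x hx => absurd hx (S.V_pos x).ne']

lemma AssumptionA.exists_eventually_lamE_le {S : RSSetup U} {lam0 : ℝ} (hA : S.AssumptionA lam0)
    {t : ℕ} (ht : t ∈ Finset.Icc 1 S.T) (u : U) :
    ∃ K, ∀ l ∈ Set.Ioo 0 lam0, ∀ᶠ x in cofinite, ∀ ε ∈ Set.Ioc 0 S.eps0,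
      S.lamE ε t x u (fun z => l * S.V z) ≤ K * (l * S.V x) := by
  obtain ⟨K, hK⟩ := hA.2.2.2 t ht u
  refine ⟨K, fun l hl => ?_⟩
  obtain ⟨c, hcK, hc⟩ := hK l hl
  refine hc.mono fun x hx ε hε => (hx ε hε).trans ?_
  exact mul_le_mul_of_nonneg_right hcK.le (mul_pos hl.1 (S.V_pos x)).le

end RSSetup

/-- Under Assumption (A), for any `h ∈ B_V`, each `t ∈ {1,…,T}` and each
`u ∈ U`, the function `x ↦ Λ_t(x,u;h)` belongs to `B_V`. -/
theorem statement4 {U : Type*} [MetricSpace U] [CompleteSpace U]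
    (S : RSSetup U) (lam0 : ℝ) (hA : S.AssumptionA lam0)
    (h : ℤ → ℝ) (hh : S.memBV h)
    (t : ℕ) (ht : t ∈ Finset.Icc 1 S.T) (u : U) :
    S.memBV fun x => S.lam t x u h := by
  have hsum := fun ε hε x => (hA.2.1 t ht x u).1 ε hε
  have hlim := fun x => (hA.2.2.1 t ht x h hh).2 u _ tendsto_const_nhds
  exact S.memBV_iff.2 <| statement4_general (fun x => (S.V_pos x).le) S.tendsto_V_cofinite_atTop
    S.eps0_pos hA.1 (fun ε hε x => S.q_nonneg ε hε t ht x u) (fun ε hε x => S.q_pmf ε hε t ht x u)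
    hsum (hA.exists_eventually_lamE_le ht u) (S.memBV_iff.1 hh) hlim
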